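/- Prager–Synge theorem (smooth setting, Theorem 2.2 of the paper): Let d ≥ 1, let f : ℝ^d → ℝ, let u : ℝ^d → ℝ be a C² compactly supported function with Δu(x) = −f(x) for all x ∈ ℝ^d, let v : ℝ^d → ℝ be any C¹ compactly supported function, and let σ* : ℝ^d → ℝ^d be any C¹ compactly supported vector field satisfying the equilibrium condition div σ*(x) = −f(x) for all x ∈ ℝ^d. Then ∫_{ℝ^d} ‖∇u(x) − ∇v(x)‖² dx + ∫_{ℝ^d} ‖∇u(x) − σ*(x)‖² dx = ∫_{ℝ^d} ‖∇v(x) − σ*(x)‖² dx. -/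

import Mathlib

open MeasureTheory RealInnerProductSpace

/-- Divergence of a vector field on `ℝ^d`: `div σ (x) = ∑ i (∂σᵢ/∂xᵢ)(x)`. -/
noncomputable def vdiv {d : ℕ} (σ : EuclideanSpace ℝ (Fin d) → EuclideanSpace ℝ (Fin d))
    (x : EuclideanSpace ℝ (Fin d)) : ℝ :=
  ∑ i : Fin d, fderiv ℝ σ x (EuclideanSpace.single i (1 : ℝ)) i

/-!
The difference `∇u - ∇v` is the gradient of the compactly supported function `u - v`, while
`∇u - σ*` is divergence free, because `∇u` and `σ*` have the same divergence. Integrating by parts,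
gradients of compactly supported functions are `L²`-orthogonal to divergence-free fields, so the
identity is Pythagoras' theorem in `L²`.
-/

section IntegralCalculus

lemma integrable_inner_of_memLp_two {α 𝕜 E : Type*} [MeasurableSpace α] {μ : Measure α}
    [RCLike 𝕜] [NormedAddCommGroup E] [InnerProductSpace 𝕜 E] {a b : α → E}
    (ha : MemLp a 2 μ) (hb : MemLp b 2 μ) : Integrable (fun x => inner 𝕜 (a x) (b x)) μ := by
  refine (L2.integrable_inner (𝕜 := 𝕜) (ha.toLp a) (hb.toLp b)).congr ?_
  filter_upwards [ha.coeFn_toLp, hb.coeFn_toLp] with x hax hbx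
  rw [hax, hbx]

lemma integral_norm_sub_sq {α E : Type*} [MeasurableSpace α] {μ : Measure α}
    [NormedAddCommGroup E] [InnerProductSpace ℝ E] {a b : α → E}
    (ha : MemLp a 2 μ) (hb : MemLp b 2 μ) :
    ∫ x, ‖a x - b x‖ ^ 2 ∂μ
      = ∫ x, ‖a x‖ ^ 2 ∂μ - 2 * ∫ x, ⟪a x, b x⟫ ∂μ + ∫ x, ‖b x‖ ^ 2 ∂μ := by
  have ha_sq := ha.integrable_norm_pow two_ne_zero
  have hb_sq := hb.integrable_norm_pow two_ne_zero
  have hab := (integrable_inner_of_memLp_two (𝕜 := ℝ) ha hb).const_mul 2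
  calc
    ∫ x, ‖a x - b x‖ ^ 2 ∂μ
        = ∫ x, (‖a x‖ ^ 2 - 2 * ⟪a x, b x⟫ + ‖b x‖ ^ 2) ∂μ := by simp only [norm_sub_sq_real]
    _ = ∫ x, (‖a x‖ ^ 2 - 2 * ⟪a x, b x⟫) ∂μ + ∫ x, ‖b x‖ ^ 2 ∂μ :=
      integral_add (ha_sq.sub hab) hb_sq
    _ = ∫ x, ‖a x‖ ^ 2 ∂μ - 2 * ∫ x, ⟪a x, b x⟫ ∂μ + ∫ x, ‖b x‖ ^ 2 ∂μ := by
      rw [integral_sub ha_sq hab, integral_const_mul]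

lemma integral_fderiv_eq_zero {E G : Type*} [NormedAddCommGroup E] [NormedSpace ℝ E]
    [FiniteDimensional ℝ E] [MeasurableSpace E] [BorelSpace E] {μ : Measure E}
    [μ.IsAddHaarMeasure] [NormedAddCommGroup G] [NormedSpace ℝ G] {F : E → G}
    (hF : Differentiable ℝ F) (hF_int : Integrable F μ) (hF' : Integrable (fderiv ℝ F) μ) :
    ∫ x, fderiv ℝ F x ∂μ = 0 := by
  ext v
  rw [ContinuousLinearMap.integral_apply hF']
  -- Integration by parts against the constant function `1`, whose derivative vanishes.
  simpa using integral_smul_fderiv_eq_neg_fderiv_smul_of_integrable (μ := μ)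
    (f := fun _ : E => (1 : ℝ)) (g := F) (v := v) (by simp)
    (by simpa using hF'.apply_continuousLinearMap v) (by simpa using hF_int)
    (fun x _ => differentiableAt_const 1) (fun x _ => hF x)

end IntegralCalculus

section Gradient

variable {𝕜 F : Type*} [RCLike 𝕜] [NormedAddCommGroup F] [InnerProductSpace 𝕜 F] [CompleteSpace F]

lemma gradient_sub {u v : F → 𝕜} {x : F} (hu : DifferentiableAt 𝕜 u x)
    (hv : DifferentiableAt 𝕜 v x) : gradient (u - v) x = gradient u x - gradient v x := by
  simp only [gradient, fderiv_sub hu hv, map_sub]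

lemma hasCompactSupport_gradient {u : F → 𝕜} (hu : HasCompactSupport u) :
    HasCompactSupport (gradient u) :=
  (hu.fderiv 𝕜).comp_left (map_zero (InnerProductSpace.toDual 𝕜 F).symm)

lemma contDiff_gradient {F : Type*} [NormedAddCommGroup F] [InnerProductSpace ℝ F]
    [CompleteSpace F] {u : F → ℝ} {m n : WithTop ℕ∞}
    (hu : ContDiff ℝ n u) (hmn : m + 1 ≤ n) : ContDiff ℝ m (gradient u) :=
  (InnerProductSpace.toDual ℝ F).symm.toContinuousLinearEquiv.contDiff.comp (hu.fderiv_right hmn)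

end Gradient

section Divergence

/-- The trace of endomorphisms of a finite-dimensional normed space, as a continuous linear form.
Applied to the derivative of a vector field it gives the divergence, and continuity lets it commute
with integrals. -/
noncomputable def traceCLM (E : Type*) [NormedAddCommGroup E] [NormedSpace ℝ E]
    [FiniteDimensional ℝ E] : (E →L[ℝ] E) →L[ℝ] ℝ :=
  LinearMap.toContinuousLinearMap (LinearMap.trace ℝ E ∘ₗ ContinuousLinearMap.coeLM ℝ)

lemma traceCLM_smulRight {E : Type*} [NormedAddCommGroup E] [NormedSpace ℝ E]
    [FiniteDimensional ℝ E] (φ : E →L[ℝ] ℝ) (y : E) : traceCLM E (φ.smulRight y) = φ y :=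
  LinearMap.trace_smulRight (φ : E →ₗ[ℝ] ℝ) y

variable {d : ℕ} {w : EuclideanSpace ℝ (Fin d) → ℝ}
  {σ τ : EuclideanSpace ℝ (Fin d) → EuclideanSpace ℝ (Fin d)} {x : EuclideanSpace ℝ (Fin d)}

lemma vdiv_eq_traceCLM (σ : EuclideanSpace ℝ (Fin d) → EuclideanSpace ℝ (Fin d))
    (x : EuclideanSpace ℝ (Fin d)) : vdiv σ x = traceCLM _ (fderiv ℝ σ x) := by
  simp [vdiv, traceCLM, LinearMap.trace_eq_sum_inner _ (EuclideanSpace.basisFun (Fin d) ℝ),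
    EuclideanSpace.inner_single_left]

lemma vdiv_sub (hσ : DifferentiableAt ℝ σ x) (hτ : DifferentiableAt ℝ τ x) :
    vdiv (σ - τ) x = vdiv σ x - vdiv τ x := by
  simp only [vdiv_eq_traceCLM, fderiv_sub hσ hτ, map_sub]

lemma vdiv_smul (hw : DifferentiableAt ℝ w x) (hτ : DifferentiableAt ℝ τ x) :
    vdiv (w • τ) x = w x * vdiv τ x + ⟪gradient w x, τ x⟫ := by
  simp only [vdiv_eq_traceCLM, fderiv_smul hw hτ, map_add, map_smul, smul_eq_mul,
    traceCLM_smulRight, inner_gradient_left]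

lemma continuous_vdiv (hσ : ContDiff ℝ 1 σ) : Continuous (vdiv σ) := by
  rw [funext (vdiv_eq_traceCLM σ)]
  exact (traceCLM _).continuous.comp (hσ.continuous_fderiv one_ne_zero)

lemma integrable_vdiv (hσ : Integrable (fderiv ℝ σ)) : Integrable (vdiv σ) := by
  rw [funext (vdiv_eq_traceCLM σ)]
  exact (traceCLM _).integrable_comp hσ

lemma integral_vdiv_eq_zero (hσ : Differentiable ℝ σ) (hσ_int : Integrable σ)
    (hσ' : Integrable (fderiv ℝ σ)) : ∫ x, vdiv σ x = 0 := by
  simp only [vdiv_eq_traceCLM]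
  rw [ContinuousLinearMap.integral_comp_comm _ hσ', integral_fderiv_eq_zero hσ hσ_int hσ', map_zero]

lemma integral_inner_gradient_eq_neg_integral_mul_vdiv (hw : ContDiff ℝ 1 w)
    (hw_supp : HasCompactSupport w) (hτ : ContDiff ℝ 1 τ) :
    ∫ x, ⟪gradient w x, τ x⟫ = -∫ x, w x * vdiv τ x := by
  have hwτ : ContDiff ℝ 1 (w • τ) := hw.smul hτ
  have hwτ_supp : HasCompactSupport (w • τ) := hw_supp.smul_right
  have fderiv_int : Integrable (fderiv ℝ (w • τ)) :=
    (hwτ.continuous_fderiv one_ne_zero).integrable_of_hasCompactSupport (hwτ_supp.fderiv ℝ)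
  have integral_vdiv_smul : ∫ x, vdiv (w • τ) x = 0 :=
    integral_vdiv_eq_zero (hwτ.differentiable one_ne_zero)
      (hwτ.continuous.integrable_of_hasCompactSupport hwτ_supp) fderiv_int
  have product_rule (x) : ⟪gradient w x, τ x⟫ = vdiv (w • τ) x - w x * vdiv τ x := by
    rw [vdiv_smul (hw.differentiable one_ne_zero x) (hτ.differentiable one_ne_zero x),
      add_sub_cancel_left]
  have mul_vdiv_int : Integrable (fun x => w x * vdiv τ x) :=
    (hw.continuous.mul (continuous_vdiv hτ)).integrable_of_hasCompactSupport hw_supp.mul_right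
  simp only [product_rule]
  rw [integral_sub (integrable_vdiv fderiv_int) mul_vdiv_int, integral_vdiv_smul, zero_sub]

lemma integral_inner_gradient_eq_zero_of_vdiv_eq_zero (hw : ContDiff ℝ 1 w)
    (hw_supp : HasCompactSupport w) (hτ : ContDiff ℝ 1 τ) (hdiv : ∀ x, vdiv τ x = 0) :
    ∫ x, ⟪gradient w x, τ x⟫ = 0 := by
  rw [integral_inner_gradient_eq_neg_integral_mul_vdiv hw hw_supp hτ]
  simp only [hdiv, mul_zero, integral_zero, neg_zero]

end Divergence

theorem prager_synge_general {d : ℕ} {u v : EuclideanSpace ℝ (Fin d) → ℝ}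
    {σ : EuclideanSpace ℝ (Fin d) → EuclideanSpace ℝ (Fin d)}
    (hu : ContDiff ℝ 2 u) (hv : ContDiff ℝ 1 v) (hσ : ContDiff ℝ 1 σ)
    (hdiv : ∀ x, vdiv σ x = vdiv (gradient u) x) (huv : HasCompactSupport (u - v))
    (hL2 : MemLp (gradient u - σ) 2) :
    (∫ x, ‖gradient u x - gradient v x‖ ^ 2) + (∫ x, ‖gradient u x - σ x‖ ^ 2)
      = ∫ x, ‖gradient v x - σ x‖ ^ 2 := by
  have huv_diff : ContDiff ℝ 1 (u - v) := (hu.of_le one_le_two).sub hv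
  have hgradu : ContDiff ℝ 1 (gradient u) := contDiff_gradient hu one_add_one_eq_two.le
  have hgrad (x) : gradient (u - v) x = gradient u x - gradient v x :=
    gradient_sub (hu.differentiable two_ne_zero x) (hv.differentiable one_ne_zero x)
  have hgrad_L2 : MemLp (gradient (u - v)) 2 :=
    (contDiff_gradient huv_diff (zero_add 1).le).continuous.memLp_of_hasCompactSupport
      (hasCompactSupport_gradient huv)
  have hvdiv (x) : vdiv (gradient u - σ) x = 0 := by
    rw [vdiv_sub (hgradu.differentiable one_ne_zero x) (hσ.differentiable one_ne_zero x), hdiv,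
      sub_self]
  have orthogonal : ∫ x, ⟪gradient (u - v) x, (gradient u - σ) x⟫ = 0 :=
    integral_inner_gradient_eq_zero_of_vdiv_eq_zero huv_diff huv (hgradu.sub hσ) hvdiv
  have pythagoras := integral_norm_sub_sq hgrad_L2 hL2
  rw [orthogonal, mul_zero, sub_zero] at pythagoras
  simpa only [hgrad, Pi.sub_apply, sub_sub_sub_cancel_left, norm_sub_rev] using pythagoras.symm

/-- Prager–Synge theorem (smooth setting):
`‖∇u - ∇v‖² + ‖∇u - σ*‖² = ‖∇v - σ*‖²` in L². -/
theorem prager_synge {d : ℕ} (hd : 1 ≤ d)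
    (f u : EuclideanSpace ℝ (Fin d) → ℝ)
    (hu : ContDiff ℝ 2 u) (husupp : HasCompactSupport u)
    (hlap : ∀ x, vdiv (gradient u) x = - f x)
    (v : EuclideanSpace ℝ (Fin d) → ℝ)
    (hv : ContDiff ℝ 1 v) (hvsupp : HasCompactSupport v)
    (σstar : EuclideanSpace ℝ (Fin d) → EuclideanSpace ℝ (Fin d))
    (hσ : ContDiff ℝ 1 σstar) (hσsupp : HasCompactSupport σstar)
    (hdiv : ∀ x, vdiv σstar x = - f x) :
    (∫ x, ‖gradient u x - gradient v x‖ ^ 2) + (∫ x, ‖gradient u x - σstar x‖ ^ 2)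
      = ∫ x, ‖gradient v x - σstar x‖ ^ 2 := by
  refine prager_synge_general hu hv hσ (fun x => (hdiv x).trans (hlap x).symm)
    (husupp.sub hvsupp) (Continuous.memLp_of_hasCompactSupport ?_ ?_)
  · exact (contDiff_gradient hu one_add_one_eq_two.le).continuous.sub hσ.continuous
  · exact (hasCompactSupport_gradient husupp).sub hσsupp
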